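/- arXiv:1502.00689 — 4 statements merged into one kernel-verified Lean document; each statement's English description precedes it below -/
import Mathlib

section
/- Let B, γ, δ be real numbers with B > 0 and γB − (1−2B)δ = 0, and let P(x) = (B − 1/2)x² + (2 − 1/B)δx − (B + (1−2B)δ²)/(2B²). Then: (a) on the parabola y = P(x), the first component of the quadratic system ẋ = δx − y + Bx², ẏ = x + γy + xy equals Q(x) := (1/2)x² + ((1−B)δ/B)x + ((1−2B)δ² + B)/(2B²); and (b) the system has a singular point (a common zero of both components) lying on the parabola if and only if Bδ² ≥ 1. -/
/-!
Along the parabola `y = P x` one has `ẋ = Q x`, and the condition on `γ` makes the parabola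
invariant: `ẏ = P' x * Q x` there. Hence the singular points on the parabola are exactly the real
zeros of `Q`. Completing the square gives
`2 * Q x = (x + (1 - B) * δ / B)^2 - (B * δ^2 - 1) / B`,
so a real zero exists iff `B * δ^2 ≥ 1`.
-/

/-- For the quadratic system `ẋ = δx − y + Bx²`, `ẏ = x + γy + xy`
with `B > 0` and `γB − (1−2B)δ = 0`:
(a) on the invariant parabola `y = P x`, the first component of the system
equals `Q x := (1/2)x² + ((1−B)δ/B)x + ((1−2B)δ² + B)/(2B²)`;
(b) the system has a singular point on the parabola iff `Bδ² ≥ 1`. -/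
theorem singular_point_on_parabola (B γ δ : ℝ) (hB : 0 < B)
    (hcond : γ * B - (1 - 2 * B) * δ = 0)
    (P Q : ℝ → ℝ)
    (hP : ∀ x, P x = (B - 1/2) * x^2 + (2 - 1/B) * δ * x
      - (B + (1 - 2*B) * δ^2) / (2 * B^2))
    (hQ : ∀ x, Q x = (1/2) * x^2 + ((1 - B) * δ / B) * x
      + ((1 - 2*B) * δ^2 + B) / (2 * B^2)) :
    (∀ x : ℝ, δ * x - P x + B * x^2 = Q x) ∧
    ((∃ x : ℝ, δ * x - P x + B * x^2 = 0 ∧ x + γ * P x + x * P x = 0)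
      ↔ B * δ^2 ≥ 1) := by
  have hB' : B ≠ 0 := hB.ne'
  have ha : ∀ x : ℝ, δ * x - P x + B * x^2 = Q x := by
    intro x
    rw [hP, hQ]
    field_simp
    ring
  have hγ : γ = (1 - 2 * B) * δ / B := by
    rw [eq_div_iff hB']
    linarith
  -- Invariance of the parabola: the first factor is the derivative of `P`.
  have hinv : ∀ x : ℝ, x + γ * P x + x * P x
      = ((2 * B - 1) * x + (2 - 1 / B) * δ) * Q x := by
    intro x
    rw [hP, hQ, hγ]
    field_simp
    ring
  have hsq : ∀ x : ℝ, 2 * Q x = (x + (1 - B) * δ / B)^2 - (B * δ^2 - 1) / B := by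
    intro x
    rw [hQ]
    field_simp
    ring
  refine ⟨ha, ?_, ?_⟩
  · rintro ⟨x, hx, -⟩
    rw [ha] at hx
    have h0 : 0 ≤ (B * δ^2 - 1) / B := by
      nlinarith [hsq x, sq_nonneg (x + (1 - B) * δ / B)]
    have h1 : 0 ≤ B * δ^2 - 1 := by
      simpa [div_mul_cancel₀ _ hB'] using mul_nonneg h0 hB.le
    linarith
  · intro h
    have h0 : 0 ≤ (B * δ^2 - 1) / B := div_nonneg (by linarith) hB.le
    have hQ0 : Q (√((B * δ^2 - 1) / B) - (1 - B) * δ / B) = 0 := by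
      have h2 := hsq (√((B * δ^2 - 1) / B) - (1 - B) * δ / B)
      rw [sub_add_cancel, Real.sq_sqrt h0] at h2
      linarith
    exact ⟨_, by rw [ha, hQ0], by rw [hinv, hQ0, mul_zero]⟩
end

section
/- Let B, δ be real numbers with B > 0 and Bδ² < 1, and set Q(x) = (1/2)x² + ((1−B)δ/B)x + ((1−2B)δ² + B)/(2B²) (which has no real zero). Then the symmetric improper integral of the divergence along the invariant parabola converges: the limit as x₀ → +∞ of ∫_{−x₀}^{x₀} ((1+2B)x + (1−B)δ/B)/Q(x) dx exists and equals 4πδ(B−1)·√(B/(1−Bδ²)). In particular, this limit is nonzero whenever δ ≠ 0 and B ≠ 1. -/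
/-!
Write `c = (1 - B)δ/B` and `w = √((1 - Bδ²)/B)`. Completing the square gives
`Q x = ((x + c)² + w²)/2`, and the numerator is `(1 + 2B)(x + c) - 2Bc`, so the integrand has the
primitive `(1 + 2B) log((x + c)² + w²) - (4Bc/w) arctan((x + c)/w)`
(`hasDerivAt_log_sub_arctan`). Over `[-x₀, x₀]` the logarithms cancel in the limit
(`tendsto_log_sub_log`), while the arctangents contribute `π` (`tendsto_arctan_sub_arctan`),
leaving `-4πBc/w = 4πδ(B - 1)√(B/(1 - Bδ²))`.
-/

open Real Filter

lemma hasDerivAt_log_sub_arctan (a b c w x : ℝ) (hw : 0 < w) :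
    HasDerivAt (fun x => a * Real.log ((x + c)^2 + w^2) - 2 * b / w * Real.arctan ((x + c) / w))
      ((a * (x + c) - b) / (((x + c)^2 + w^2) / 2)) x := by
  have hpos : (x + c)^2 + w^2 ≠ 0 := by positivity
  have h1 : HasDerivAt (fun x : ℝ => x + c) 1 x := (hasDerivAt_id x).add_const c
  have h2 := (((h1.pow 2).add_const (w^2)).log hpos).const_mul a
  have h3 := ((h1.div_const w).arctan).const_mul (2 * b / w)
  refine (h2.sub h3).congr_deriv ?_
  have h4 : 1 + ((x + c) / w)^2 = ((x + c)^2 + w^2) / w^2 := by field_simp; ring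
  rw [h4]
  simp only [Pi.pow_apply]
  field_simp
  ring

lemma tendsto_log_sub_log (c w : ℝ) :
    Tendsto (fun x : ℝ => Real.log ((x + c)^2 + w^2) - Real.log ((-x + c)^2 + w^2))
      atTop (nhds 0) := by
  -- Factoring `x²` out of both arguments reduces the claim to continuity at `u = x⁻¹ = 0`.
  have hc : ContinuousAt (fun u : ℝ => Real.log ((1 + c * u)^2 + (w * u)^2)
      - Real.log ((-1 + c * u)^2 + (w * u)^2)) 0 := by
    refine ContinuousAt.sub (ContinuousAt.log (by fun_prop) (by norm_num))
      (ContinuousAt.log (by fun_prop) (by norm_num))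
  have ht := hc.tendsto.comp tendsto_inv_atTop_zero
  simp only [mul_zero, add_zero] at ht
  norm_num at ht
  have hne1 : ∀ᶠ u in nhds (0 : ℝ), (1 + c * u)^2 + (w * u)^2 ≠ 0 :=
    ContinuousAt.eventually_ne (by fun_prop) (by norm_num)
  have hne2 : ∀ᶠ u in nhds (0 : ℝ), (-1 + c * u)^2 + (w * u)^2 ≠ 0 :=
    ContinuousAt.eventually_ne (by fun_prop) (by norm_num)
  refine ht.congr' ?_
  filter_upwards [eventually_gt_atTop 0, tendsto_inv_atTop_zero.eventually hne1,
    tendsto_inv_atTop_zero.eventually hne2] with x hx h1 h2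
  have e1 : (x + c)^2 + w^2 = x^2 * ((1 + c * x⁻¹)^2 + (w * x⁻¹)^2) := by field_simp
  have e2 : (-x + c)^2 + w^2 = x^2 * ((-1 + c * x⁻¹)^2 + (w * x⁻¹)^2) := by field_simp
  rw [e1, e2, Real.log_mul (by positivity) h1, Real.log_mul (by positivity) h2]
  simp only [Function.comp]
  ring

lemma tendsto_arctan_sub_arctan (c w : ℝ) (hw : 0 < w) :
    Tendsto (fun x : ℝ => Real.arctan ((x + c) / w) - Real.arctan ((-x + c) / w))
      atTop (nhds π) := by
  have h1 : Tendsto (fun x : ℝ => (x + c) / w) atTop atTop :=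
    (tendsto_atTop_add_const_right _ c tendsto_id).atTop_div_const hw
  have h2 : Tendsto (fun x : ℝ => (-x + c) / w) atTop atBot :=
    (tendsto_atBot_add_const_right _ c tendsto_neg_atTop_atBot).atBot_div_const hw
  have h3 := (tendsto_nhds_of_tendsto_nhdsWithin Real.tendsto_arctan_atTop).comp h1
  have h4 := (tendsto_nhds_of_tendsto_nhdsWithin Real.tendsto_arctan_atBot).comp h2
  have h5 := h3.sub h4
  rwa [show π / 2 - -(π / 2) = π by ring] at h5

/-- For `B > 0` and `Bδ² < 1`, the symmetric improper integral of
the divergence along the invariant parabola converges: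
`lim_{x₀→∞} ∫_{−x₀}^{x₀} ((1+2B)x + (1−B)δ/B)/Q(x) dx = 4πδ(B−1)√(B/(1−Bδ²))`,
where `Q x = (1/2)x² + ((1−B)δ/B)x + ((1−2B)δ² + B)/(2B²)`.  In particular the
limit is nonzero whenever `δ ≠ 0` and `B ≠ 1`. -/
theorem divergence_integral_along_parabola (B δ : ℝ) (hB : 0 < B)
    (hδ : B * δ^2 < 1) (Q : ℝ → ℝ)
    (hQ : ∀ x, Q x = (1/2) * x^2 + ((1 - B) * δ / B) * x
      + ((1 - 2*B) * δ^2 + B) / (2 * B^2)) :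
    Tendsto
      (fun x₀ : ℝ => ∫ x in (-x₀)..x₀, ((1 + 2*B) * x + (1 - B) * δ / B) / Q x)
      atTop
      (nhds (4 * π * δ * (B - 1) * Real.sqrt (B / (1 - B * δ^2)))) ∧
    (δ ≠ 0 → B ≠ 1 →
      4 * π * δ * (B - 1) * Real.sqrt (B / (1 - B * δ^2)) ≠ 0) := by
  have hD : 0 < 1 - B * δ^2 := by linarith
  have hs : 0 < Real.sqrt (B / (1 - B * δ^2)) := Real.sqrt_pos.mpr (by positivity)
  refine ⟨?_, fun h0 h1 => ?_⟩
  · obtain ⟨c, hc⟩ : ∃ c, c = (1 - B) * δ / B := ⟨_, rfl⟩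
    obtain ⟨w, hw⟩ : ∃ w, w = (Real.sqrt (B / (1 - B * δ^2)))⁻¹ := ⟨_, rfl⟩
    have hwpos : 0 < w := hw ▸ inv_pos.mpr hs
    have hw2 : w^2 = (1 - B * δ^2) / B := by
      rw [hw, inv_pow, Real.sq_sqrt (by positivity), inv_div]
    have hQ' : ∀ x, Q x = ((x + c)^2 + w^2) / 2 := by
      intro x
      rw [hQ, hw2, hc]
      field_simp
      ring
    have hint : ∀ x₀ : ℝ, ∫ x in (-x₀)..x₀, ((1 + 2*B) * x + (1 - B) * δ / B) / Q x
        = (1 + 2*B) * (Real.log ((x₀ + c)^2 + w^2) - Real.log ((-x₀ + c)^2 + w^2))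
          - 2 * (2 * B * c) / w
            * (Real.arctan ((x₀ + c) / w) - Real.arctan ((-x₀ + c) / w)) := by
      intro x₀
      have e : (fun x => ((1 + 2*B) * x + (1 - B) * δ / B) / Q x)
          = fun x => ((1 + 2*B) * (x + c) - 2 * B * c) / (((x + c)^2 + w^2) / 2) := by
        funext x
        rw [hQ', ← hc]
        congr 1
        ring
      rw [e, intervalIntegral.integral_eq_sub_of_hasDerivAt
        (fun x _ => hasDerivAt_log_sub_arctan (1 + 2*B) (2 * B * c) c w x hwpos)]
      · ring
      · apply Continuous.intervalIntegrable
        exact Continuous.div (by fun_prop) (by fun_prop) (fun x => by positivity)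
    simp_rw [hint]
    have hlim := ((tendsto_log_sub_log c w).const_mul (1 + 2*B)).sub
      ((tendsto_arctan_sub_arctan c w hwpos).const_mul (2 * (2 * B * c) / w))
    convert hlim using 2
    rw [hw, hc]
    field_simp
    ring
  · exact mul_ne_zero (mul_ne_zero (mul_ne_zero (by positivity) h0) (sub_ne_zero.mpr h1)) hs.ne'
end

section
/- Let μ̄₁, μ̄₂ be real numbers and let ε = ±1. Consider the planar vector field X(ρ, ȳ) = (−ερ(ȳ − 1/2 + μ̄₂ρ²), ε(2ȳ − 2ȳ² − 2μ̄₂ȳρ²) + μ̄₁ρ³) on the half-plane ρ > 0. Then ρ⁻⁵ is an integrating factor for X: the divergence of the vector field ρ⁻⁵·X(ρ, ȳ) vanishes identically on {ρ > 0}, i.e., ∂/∂ρ(ρ⁻⁵X₁) + ∂/∂ȳ(ρ⁻⁵X₂) = 0 there. -/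
/-- `ρ⁻⁵` is an integrating factor for the vector field
`X(ρ,ȳ) = (−ερ(ȳ − 1/2 + μ̄₂ρ²), ε(2ȳ − 2ȳ² − 2μ̄₂ȳρ²) + μ̄₁ρ³)` (`ε = ±1`)
on the half-plane `ρ > 0`: the divergence of `ρ⁻⁵·X` vanishes there. -/
theorem integrating_factor (μ₁ μ₂ ε : ℝ) (hε : ε = 1 ∨ ε = -1) :
    ∀ ρ y : ℝ, 0 < ρ →
      deriv (fun ρ' : ℝ =>
          ρ' ^ (-(5:ℤ)) * (-ε * ρ' * (y - 1/2 + μ₂ * ρ'^2))) ρ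
        + deriv (fun y' : ℝ =>
          ρ ^ (-(5:ℤ)) * (ε * (2*y' - 2*y'^2 - 2*μ₂*y'*ρ^2) + μ₁ * ρ^3)) y
      = 0 := by
  intro ρ y hρ
  have hρ0 : ρ ≠ 0 := hρ.ne'
  have h₁ := (hasDerivAt_zpow (-(5:ℤ)) ρ (Or.inl hρ0)).fun_mul
    (((hasDerivAt_id' ρ).const_mul (-ε)).fun_mul
      (((hasDerivAt_pow 2 ρ).const_mul μ₂).const_add (y - 1/2)))
  have h₂ := ((((((hasDerivAt_id' y).const_mul 2).fun_sub
    ((hasDerivAt_pow 2 y).const_mul 2)).fun_sub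
      (((hasDerivAt_id' y).const_mul (2*μ₂)).mul_const (ρ^2))).const_mul ε).add_const
        (μ₁ * ρ^3)).const_mul (ρ ^ (-(5:ℤ)))
  rw [h₁.deriv, h₂.deriv]
  -- Express both negative powers through `ρ ^ (-6)`, so that the sum is polynomial in it.
  have h6 : ρ ^ (-(5:ℤ)) = ρ ^ (-(5:ℤ) - 1) * ρ := by
    rw [← zpow_add_one₀ hρ0]; norm_num
  rw [h6]
  push_cast
  ring
end

section
/- Let μ̄₁, μ̄₂ be real numbers, ε = ±1, and define H(ρ, ȳ) = (ȳ² − ȳ)/(2ρ⁴) + μ̄₂ȳ/ρ² − εμ̄₁/ρ on {ρ ≠ 0}. Then H is a first integral of the planar system ρ̇ = −ερ(ȳ − 1/2 + μ̄₂ρ²), ȳ̇ = ε(2ȳ − 2ȳ² − 2μ̄₂ȳρ²) + μ̄₁ρ³: for every differentiable solution (ρ(t), ȳ(t)) with ρ(t) ≠ 0 for all t, the function t ↦ H(ρ(t), ȳ(t)) is constant. Equivalently, the directional derivative of H along the vector field vanishes identically on {ρ ≠ 0}. -/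
/-!
Write `g = y - 1/2 + μ₂ρ²`. The partial derivatives of the first integral are `∂H/∂y = g / ρ⁴` and
`∂H/∂ρ = -(2(y² - y) + 2μ₂yρ² - εμ₁ρ³) / ρ⁵`. Since `ε² = 1`, the vector field is `ερ⁵` times the
Hamiltonian field `(-∂H/∂y, ∂H/∂ρ)`, so the derivative of `H` along it is zero. Constancy along
solutions is then the chain rule together with the mean value theorem.
-/

/-- The chain rule for the explicit first integral along a differentiable curve. Constant choices
of `ρ` or `y` recover its partial derivatives. -/
lemma hasDerivAt_firstIntegral (μ₁ μ₂ ε : ℝ) {ρ y : ℝ → ℝ} {a b t : ℝ} (h0 : ρ t ≠ 0)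
    (hρ : HasDerivAt ρ a t) (hy : HasDerivAt y b t) :
    HasDerivAt (fun u => ((y u)^2 - y u) / (2 * (ρ u)^4) + μ₂ * y u / (ρ u)^2 - ε * μ₁ / ρ u)
      (-(2 * ((y t)^2 - y t) + 2 * μ₂ * y t * (ρ t)^2 - ε * μ₁ * (ρ t)^3) / (ρ t)^5 * a
        + (y t - 1/2 + μ₂ * (ρ t)^2) / (ρ t)^4 * b) t := by
  have h := ((((hy.pow 2).sub hy).div ((hρ.pow 4).const_mul 2)
    (mul_ne_zero two_ne_zero (pow_ne_zero 4 h0))).add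
    ((hy.const_mul μ₂).div (hρ.pow 2) (pow_ne_zero 2 h0))).sub
    ((hasDerivAt_const t (ε * μ₁)).div hρ h0)
  refine h.congr_deriv ?_
  simp only [Pi.pow_apply, Pi.sub_apply]
  field_simp
  push_cast
  ring

/-- The gradient of the first integral is orthogonal to the vector field. -/
lemma gradient_mul_field_eq_zero (μ₁ μ₂ ε ρ y : ℝ) (hε : ε = 1 ∨ ε = -1) (h0 : ρ ≠ 0) :
    -(2 * (y^2 - y) + 2 * μ₂ * y * ρ^2 - ε * μ₁ * ρ^3) / ρ^5
        * (-ε * ρ * (y - 1/2 + μ₂ * ρ^2))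
      + (y - 1/2 + μ₂ * ρ^2) / ρ^4
        * (ε * (2*y - 2*y^2 - 2*μ₂*y*ρ^2) + μ₁ * ρ^3) = 0 := by
  rcases hε with rfl | rfl <;> field_simp <;> ring

/-- `H(ρ,ȳ) = (ȳ² − ȳ)/(2ρ⁴) + μ̄₂ȳ/ρ² − εμ̄₁/ρ` is a first
integral of the system `ρ̇ = −ερ(ȳ − 1/2 + μ̄₂ρ²)`,
`ȳ̇ = ε(2ȳ − 2ȳ² − 2μ̄₂ȳρ²) + μ̄₁ρ³`: its directional derivative along the
vector field vanishes on `{ρ ≠ 0}`, and `H` is constant along every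
differentiable solution with `ρ(t) ≠ 0`. -/
theorem first_integral_blowup (μ₁ μ₂ ε : ℝ) (hε : ε = 1 ∨ ε = -1)
    (H X₁ X₂ : ℝ → ℝ → ℝ)
    (hH : ∀ ρ y, H ρ y = (y^2 - y) / (2 * ρ^4) + μ₂ * y / ρ^2 - ε * μ₁ / ρ)
    (hX₁ : ∀ ρ y, X₁ ρ y = -ε * ρ * (y - 1/2 + μ₂ * ρ^2))
    (hX₂ : ∀ ρ y, X₂ ρ y = ε * (2*y - 2*y^2 - 2*μ₂*y*ρ^2) + μ₁ * ρ^3) :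
    (∀ ρ y : ℝ, ρ ≠ 0 →
      deriv (fun ρ' => H ρ' y) ρ * X₁ ρ y
        + deriv (fun y' => H ρ y') y * X₂ ρ y = 0) ∧
    (∀ ρ y : ℝ → ℝ, (∀ t, ρ t ≠ 0) →
      (∀ t, HasDerivAt ρ (X₁ (ρ t) (y t)) t) →
      (∀ t, HasDerivAt y (X₂ (ρ t) (y t)) t) →
      ∀ s t : ℝ, H (ρ s) (y s) = H (ρ t) (y t)) := by
  constructor
  · intro ρ y h0
    have h₁ := hasDerivAt_firstIntegral μ₁ μ₂ ε h0 (hasDerivAt_id' ρ) (hasDerivAt_const ρ y)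
    have h₂ := hasDerivAt_firstIntegral μ₁ μ₂ ε h0 (hasDerivAt_const y ρ) (hasDerivAt_id' y)
    simp only [hH, hX₁, hX₂]
    rw [h₁.deriv, h₂.deriv, mul_zero, mul_zero, add_zero, zero_add, mul_one, mul_one]
    exact gradient_mul_field_eq_zero μ₁ μ₂ ε ρ y hε h0
  · intro ρ y h0 hρ hy
    have h : ∀ t, HasDerivAt (fun u => H (ρ u) (y u)) 0 t := by
      intro t
      simp only [hH]
      refine (hasDerivAt_firstIntegral μ₁ μ₂ ε (h0 t) (hρ t) (hy t)).congr_deriv ?_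
      rw [hX₁, hX₂]
      exact gradient_mul_field_eq_zero μ₁ μ₂ ε (ρ t) (y t) hε (h0 t)
    exact is_const_of_deriv_eq_zero (fun t => (h t).differentiableAt) (fun t => (h t).deriv)
end
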